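/- arXiv:1910.03742 — 4 statements merged into one kernel-verified Lean document; each statement's English description precedes it below -/
import Mathlib

section
/- Let d > 3 and let k be a positive integer with k ≤ 2^(d/2 − 2). Then the VC-dimension of bin(lin_k(𝒯)), the class of thresholded linear combinations of k linear threshold functions on ℝ^d, is at least (dk/8)·log₂(k/4). -/
/-- The class `𝒯` of linear threshold functions on `ℝ^d`, as `{0,1}`-valued
real functions `x ↦ 𝟙[θᵀx ≥ t]`. -/
def LTF (d : ℕ) : Set ((Fin d → ℝ) → ℝ) :=
  {f | ∃ (θ : Fin d → ℝ) (t : ℝ), f = fun x => if (∑ j, θ j * x j) ≥ t then (1 : ℝ) else 0}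

/-- `lin_k(𝒢)`: linear combinations of `k` functions from `G`. -/
def linComb {α : Type*} (G : Set (α → ℝ)) (k : ℕ) : Set (α → ℝ) :=
  {f | ∃ (w : Fin k → ℝ) (g : Fin k → α → ℝ), (∀ i, g i ∈ G) ∧
    f = fun x => ∑ i, w i * g i x}

/-- `bin(ℱ)`: thresholded binary versions `x ↦ 𝟙[f(x) ≥ t]` of functions in `F`. -/
def binOf {α : Type*} (F : Set (α → ℝ)) : Set (α → ℝ) :=
  {h | ∃ f ∈ F, ∃ t : ℝ, h = fun x => if f x ≥ t then (1 : ℝ) else 0}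

/-- A class of `{0,1}`-valued functions shatters some `m` points. -/
def Shatters {α : Type*} (F : Set (α → ℝ)) (m : ℕ) : Prop :=
  ∃ x : Fin m → α, ∀ b : Fin m → Bool, ∃ f ∈ F,
    ∀ i, f (x i) = if b i then (1 : ℝ) else 0

/-!
The points to shatter are the `(i, e_l, e_j)` in `ℝ × ℝ^R × ℝ^g` such that digit `l` of `i < k / 2`
is a one; `j` runs over `g ≥ d / 2` copies of the same configuration. The difference of two parallel
thresholds is the indicator of a slab. Given permutations `σ j` of the numbers below `k / 2`, take
for each `s < k / 2` a slab that contains, of the points above, exactly those with `σ j i = s` for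
which digit `l` of `s` is a one. The sum of these slabs at `(i, e_l, e_j)` is then digit `l` of
`σ j i`. Swapping `2 q` and `2 q + 1` where needed and recursing on the even and the odd numbers
separately produces permutations for which these digits are any prescribed labels.

The number of points is `g` times the number of ones in the digits of the numbers below `k / 2`,
which satisfies a halving recurrence and is at least `k / 4 * logb 2 (k / 4)` by convexity of
`x * logb 2 x`.
-/

theorem bit_lt_iff {M q : ℕ} (b : Bool) : Nat.bit b q < M ↔ q < (M + 1 - b.toNat) / 2 := by
  rw [Nat.bit_val]
  cases b <;> grind

/-- The numbers below `M`, sorted by their lowest binary digit: `⟨b, q⟩` stands for `2 * q + b`. -/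
def bitEquiv (M : ℕ) : (Σ b : Bool, Fin ((M + 1 - b.toNat) / 2)) ≃ Fin M where
  toFun p := ⟨Nat.bit p.1 p.2, (bit_lt_iff _).2 p.2.isLt⟩
  invFun i := ⟨(i : ℕ).bodd, (i : ℕ).div2, (bit_lt_iff _).1 <| by
    rw [Nat.bit_bodd_div2]
    exact i.isLt⟩
  left_inv := fun ⟨b, q⟩ => Sigma.ext (Nat.bodd_bit b q) <|
    (Fin.heq_ext_iff (by simp only [Nat.bodd_bit])).2 (Nat.div2_bit b q)
  right_inv i := Fin.ext (Nat.bit_bodd_div2 i)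

theorem val_bitEquiv {M : ℕ} (b : Bool) (q : Fin ((M + 1 - b.toNat) / 2)) :
    (bitEquiv M ⟨b, q⟩ : ℕ) = Nat.bit b q := rfl

theorem exists_perm_testBit_zero_eq {M : ℕ} (t : Fin M → Bool) :
    ∃ π : Equiv.Perm (Fin M), ∀ i : Fin M, (π i : ℕ) / 2 = i / 2 ∧
      ((i : ℕ).testBit 0 → (π i : ℕ).testBit 0 = t i) := by
  classical
  let Exchanged (q : ℕ) : Prop := ∃ h : 2 * q + 1 < M, t ⟨2 * q + 1, h⟩ = false
  -- the reflection `j ↦ 4 * q + 1 - j` exchanges `2 * q` and `2 * q + 1`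
  let f (i : ℕ) : ℕ := if Exchanged (i / 2) then 4 * (i / 2) + 1 - i else i
  have f_div (i : ℕ) : f i / 2 = i / 2 := by
    simp only [f]; split_ifs <;> omega
  have f_lt (i : Fin M) : f i < M := by
    simp only [f]; split_ifs with h
    · have := h.1; omega
    · exact i.isLt
  have f_involutive : Function.Involutive f := fun i => by
    change (if Exchanged (f i / 2) then 4 * (f i / 2) + 1 - f i else f i) = i
    rw [f_div]
    by_cases h : Exchanged (i / 2) <;> simp only [f, h, if_true, if_false]; omega
  refine ⟨Function.Involutive.toPerm (fun i => ⟨f i, f_lt i⟩) fun i => Fin.ext (f_involutive i),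
    fun i => ⟨f_div i, fun hi => ?_⟩⟩
  rw [Nat.testBit_zero, decide_eq_true_iff] at hi
  have hi' : 2 * ((i : ℕ) / 2) + 1 = i := by omega
  have hf : f i = if t i = false then (i : ℕ) - 1 else i := by
    simp only [f, Exchanged, hi', Fin.eta, i.isLt, exists_true_left]
    congr 1; omega
  change (f i).testBit 0 = t i
  rw [hf, Nat.testBit_zero]
  cases t i <;> grind

theorem exists_perm_testBit_eq {R M : ℕ} (T : Fin M → Fin R → Bool) :
    ∃ σ : Equiv.Perm (Fin M), ∀ (i : Fin M) (l : Fin R),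
      (i : ℕ).testBit l → (σ i : ℕ).testBit l = T i l := by
  induction R generalizing M with
  | zero => exact ⟨1, fun _ l => l.elim0⟩
  | succ R ih =>
    obtain ⟨π, hπ⟩ := exists_perm_testBit_zero_eq fun i => T i 0
    choose σ hσ using fun b : Bool => ih fun q l => T (π.symm (bitEquiv M ⟨b, q⟩)) l.succ
    refine ⟨π.trans ((bitEquiv M).permCongr (Equiv.sigmaCongrRight σ)), fun i l hil => ?_⟩
    obtain ⟨⟨b, q⟩, hbq⟩ := (bitEquiv M).surjective (π i)
    have hσi : (bitEquiv M).permCongr (Equiv.sigmaCongrRight σ) (π i) = bitEquiv M ⟨b, σ b q⟩ := by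
      simp [Equiv.permCongr_apply, ← hbq]
    rw [Equiv.trans_apply, hσi, val_bitEquiv]
    cases l using Fin.cases with
    | zero =>
      rw [← (hπ i).2 hil, ← hbq, val_bitEquiv]
      simp only [Fin.val_zero, Nat.testBit_bit_zero]
    | succ l =>
      have hq : (i : ℕ) / 2 = q := by rw [← (hπ i).1, ← hbq, val_bitEquiv, Nat.bit_div_two]
      rw [Fin.val_succ, Nat.testBit_succ, hq] at hil
      rw [Fin.val_succ, Nat.testBit_bit_succ, hσ b q l hil, hbq, π.symm_apply_apply]

/-- The total number of binary digits `1` in the numbers below `M`. -/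
def digitTotal (M : ℕ) : ℕ := ∑ i ∈ Finset.range M, i.bitIndices.length

theorem digitTotal_succ (M : ℕ) : digitTotal (M + 1) = digitTotal M + M.bitIndices.length :=
  Finset.sum_range_succ _ M

theorem digitTotal_one : digitTotal 1 = 0 := rfl

theorem digitTotal_two_mul (m : ℕ) : digitTotal (2 * m) = 2 * digitTotal m + m := by
  induction m with
  | zero => rfl
  | succ m ih =>
    rw [show 2 * (m + 1) = 2 * m + 1 + 1 by ring, digitTotal_succ, digitTotal_succ, ih,
      digitTotal_succ, Nat.bitIndices_two_mul, Nat.bitIndices_two_mul_add_one, List.length_cons,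
      List.length_map]
    ring

theorem digitTotal_two_mul_add_one (m : ℕ) :
    digitTotal (2 * m + 1) = digitTotal m + digitTotal (m + 1) + m := by
  rw [digitTotal_succ, digitTotal_two_mul, digitTotal_succ, Nat.bitIndices_two_mul, List.length_map]
  ring

theorem card_filter_testBit {R i : ℕ} (hi : i < 2 ^ R) :
    (Finset.univ.filter fun l : Fin R => i.testBit l).card = i.bitIndices.length := by
  rw [← List.toFinset_card_of_nodup Nat.bitIndices_nodup,
    ← Finset.card_map (Fin.valEmbedding (n := R))]
  congr 1
  ext l
  simp only [Finset.mem_map, Finset.mem_filter, Finset.mem_univ, true_and, Fin.valEmbedding_apply,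
    List.mem_toFinset, Nat.mem_bitIndices]
  refine ⟨fun ⟨_, hl', h⟩ => h ▸ hl', fun hl => ⟨⟨l, ?_⟩, hl, rfl⟩⟩
  exact (Nat.pow_lt_pow_iff_right one_lt_two).1 ((Nat.ge_two_pow_of_testBit hl).trans_lt hi)

theorem convexOn_mul_logb {b : ℝ} (hb : 1 < b) :
    ConvexOn ℝ (Set.Ici 0) fun x => x * Real.logb b x := by
  have h := Real.convexOn_mul_log.smul (inv_nonneg.2 (Real.log_pos hb).le)
  refine h.congr fun x _ => ?_
  simp only [Real.logb, smul_eq_mul]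
  ring

theorem add_half_mul_logb_le {b x : ℝ} (hb : 1 < b) (hx : 0 ≤ x) :
    (x + 1 / 2) * Real.logb b (x + 1 / 2) ≤
      (x * Real.logb b x + (x + 1) * Real.logb b (x + 1)) / 2 := by
  have h := (convexOn_mul_logb hb).2 (Set.mem_Ici.2 hx) (Set.mem_Ici.2 (add_nonneg hx zero_le_one))
    one_half_pos.le one_half_pos.le (add_halves 1)
  simp only [smul_eq_mul] at h
  rw [show 1 / 2 * x + 1 / 2 * (x + 1) = x + 1 / 2 by ring] at h
  linarith

theorem logb_two_mul {x : ℝ} (hx : x ≠ 0) : Real.logb 2 (2 * x) = 1 + Real.logb 2 x := by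
  rw [Real.logb_mul two_ne_zero hx, Real.logb_self_eq_one one_lt_two]

theorem three_mul_logb_three_le : 3 * Real.logb 2 3 ≤ 5 := by
  rw [← Real.logb_rpow_eq_mul_logb_of_pos three_pos,
    Real.logb_le_iff_le_rpow one_lt_two (by positivity)]
  norm_num

/-- Six times `M / 2 * logb 2 M + 1 / 2 - M / 3 ≤ digitTotal M`: the halving step at odd `M` needs
the constant `1 / 2`, and then the linear loss `M / 3` is enough at `M = 2` and `M = 3`. -/
theorem le_digitTotal {M : ℕ} (hM : 2 ≤ M) :
    3 * M * Real.logb 2 M + 3 ≤ 6 * digitTotal M + 2 * M := by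
  induction M using Nat.strong_induction_on with
  | _ M ih =>
  obtain ⟨m, rfl | rfl⟩ := Nat.even_or_odd' M
  · obtain rfl | hm : m = 1 ∨ 2 ≤ m := by omega
    · rw [digitTotal_two_mul, digitTotal_one]
      norm_num
    · have h := ih m (by omega) hm
      rw [digitTotal_two_mul]
      push_cast
      rw [logb_two_mul (by positivity)]
      linarith
  · obtain rfl | hm : m = 1 ∨ 2 ≤ m := by omega
    · rw [digitTotal_two_mul_add_one, show 1 + 1 = 2 * 1 from rfl, digitTotal_two_mul,
        digitTotal_one]
      push_cast
      linarith [three_mul_logb_three_le]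
    · have h := ih m (by omega) hm
      have h' := ih (m + 1) (by omega) (by omega)
      have hmid := add_half_mul_logb_le one_lt_two (Nat.cast_nonneg (α := ℝ) m)
      rw [digitTotal_two_mul_add_one]
      push_cast at h' ⊢
      rw [show 2 * (m : ℝ) + 1 = 2 * (m + 1 / 2) by ring, logb_two_mul (by positivity)]
      linarith

theorem mul_log_add_half_le {x : ℝ} (hx : 0 < x) :
    (2 * x + 1) * Real.log (x + 1 / 2) ≤ 2 * x * Real.log x + (2 / 3 * x + 3) * Real.log 2 := by
  have htangent : 2 * x * (Real.log (x + 1 / 2) - Real.log x) ≤ 1 := by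
    rw [← Real.log_div (by positivity) (by positivity)]
    have h := Real.log_le_sub_one_of_pos (show 0 < (x + 1 / 2) / x by positivity)
    calc 2 * x * Real.log ((x + 1 / 2) / x) ≤ 2 * x * ((x + 1 / 2) / x - 1) := by gcongr
      _ = 1 := by field_simp; ring
  have hlog : Real.log (x + 1 / 2) ≤ 2 * Real.log 2 + ((x + 1 / 2) / 4 - 1) := by
    have h := Real.log_le_sub_one_of_pos (show 0 < (x + 1 / 2) / 4 by positivity)
    rw [Real.log_div (by positivity) four_ne_zero, show (4 : ℝ) = 2 ^ 2 by norm_num,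
      Real.log_pow] at h
    push_cast at h
    linarith
  have hlog2 : x / 4 + 1 / 8 ≤ (2 / 3 * x + 1) * Real.log 2 := by
    nlinarith [Real.log_two_gt_d9]
  linarith

theorem mul_logb_le_digitTotal {k : ℕ} (hk : 4 ≤ k) :
    (k : ℝ) / 4 * Real.logb 2 (k / 4) ≤ digitTotal (k / 2) := by
  obtain ⟨M, hM⟩ : ∃ M, k / 2 = M := ⟨_, rfl⟩
  have hM2 : (2 : ℝ) ≤ M := by exact_mod_cast (by omega : 2 ≤ M)
  have hk4 : (4 : ℝ) ≤ k := by exact_mod_cast hk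
  have hkM : (k : ℝ) / 4 ≤ (M + 1 / 2) / 2 := by
    have : (k : ℝ) ≤ 2 * M + 1 := by exact_mod_cast (by omega : k ≤ 2 * M + 1)
    linarith
  have hlogb : (2 * M + 1) * Real.logb 2 (M + 1 / 2) ≤ 2 * M * Real.logb 2 M + (2 / 3 * M + 3) := by
    have hlog2 : 0 < Real.log 2 := Real.log_pos one_lt_two
    have h := div_le_div_of_nonneg_right (mul_log_add_half_le (two_pos.trans_le hM2)) hlog2.le
    simpa only [Real.logb, add_div, mul_div_assoc, div_self hlog2.ne', mul_one] using h
  rw [hM]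
  calc (k : ℝ) / 4 * Real.logb 2 (k / 4)
      ≤ (M + 1 / 2) / 2 * Real.logb 2 ((M + 1 / 2) / 2) := by
        have := Real.logb_nonneg one_lt_two (show (1 : ℝ) ≤ k / 4 by linarith)
        gcongr
        norm_num
    _ = (M + 1 / 2) / 2 * (Real.logb 2 (M + 1 / 2) - 1) := by
        rw [Real.logb_div (by positivity) two_ne_zero, Real.logb_self_eq_one one_lt_two]
    _ ≤ digitTotal M := by
        linarith [le_digitTotal (show 2 ≤ M by omega)]

theorem sum_mem_linComb {α ι : Type*} [Fintype ι] {G : Set (α → ℝ)} (hG : G.Nonempty) {k : ℕ}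
    (hk : Fintype.card ι ≤ k) (w : ι → ℝ) {g : ι → α → ℝ} (hg : ∀ i, g i ∈ G) :
    (fun x => ∑ i, w i * g i x) ∈ linComb G k := by
  obtain ⟨g₀, hg₀⟩ := hG
  obtain ⟨e⟩ : Nonempty (ι ↪ Fin k) := Function.Embedding.nonempty_of_card_le (by simpa using hk)
  refine ⟨Function.extend e w 0, Function.extend e g fun _ => g₀, fun u => ?_, funext fun x => ?_⟩
  · by_cases hu : ∃ i, e i = u
    · obtain ⟨i, rfl⟩ := hu
      rw [e.injective.extend_apply]
      exact hg i
    · rwa [Function.extend_apply' _ _ _ hu]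
  · refine Fintype.sum_of_injective e e.injective _ _ (fun u hu => ?_) fun i => ?_
    · rw [Function.extend_apply' _ _ _ hu, Pi.zero_apply, zero_mul]
    · rw [e.injective.extend_apply, e.injective.extend_apply]

theorem threshold_mem_LTF {d : ℕ} (θ : Fin d → ℝ) (t : ℝ) :
    (fun x => if ∑ j, θ j * x j ≥ t then 1 else 0) ∈ LTF d :=
  ⟨θ, t, rfl⟩

theorem ite_ge_sub_ite_ge {α : Type*} [LinearOrder α] {a b v : α} (hab : a ≤ b) :
    ((if v ≥ a then 1 else 0) - if v ≥ b then 1 else 0 : ℝ) = if v ∈ Set.Ico a b then 1 else 0 := by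
  simp only [Set.mem_Ico]
  obtain hv | hv := lt_or_ge v a
  · simp [hv.not_ge, (hv.trans_le hab).not_ge]
  · obtain hv' | hv' := lt_or_ge v b <;> simp [hv, hv', not_le, not_lt]

theorem sum_slab_mem_linComb {ι : Type*} [Fintype ι] {d k : ℕ} (hk : 2 * Fintype.card ι ≤ k)
    (θ : ι → Fin d → ℝ) {a b : ι → ℝ} (hab : ∀ s, a s ≤ b s) :
    (fun x => ∑ s, if ∑ j, θ s j * x j ∈ Set.Ico (a s) (b s) then 1 else 0) ∈
      linComb (LTF d) k := by
  have hmem := sum_mem_linComb (ι := ι ⊕ ι) (k := k) ⟨_, threshold_mem_LTF 0 0⟩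
    (by rwa [Fintype.card_sum, ← two_mul]) (Sum.elim 1 (-1))
    (g := Sum.elim (fun s x => if ∑ j, θ s j * x j ≥ a s then 1 else 0)
      fun s x => if ∑ j, θ s j * x j ≥ b s then 1 else 0)
    (by rintro (s | s) <;> exact threshold_mem_LTF _ _)
  convert hmem using 2 with x
  simp only [Fintype.sum_sum_type, Sum.elim_inl, Sum.elim_inr, Pi.one_apply, Pi.neg_apply, one_mul,
    neg_mul, ← Finset.sum_add_distrib, ← sub_eq_add_neg, ite_ge_sub_ite_ge (hab _)]

theorem Shatters.of_finset {α ι : Type*} {F : Set (α → ℝ)} (x : ι → α) (s : Finset ι)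
    (h : ∀ b : ι → Bool, ∃ f ∈ F, ∀ i ∈ s, f (x i) = if b i then 1 else 0) :
    Shatters F s.card := by
  classical
  refine ⟨fun i => x (s.equivFin.symm i), fun b => ?_⟩
  obtain ⟨f, hf, hfx⟩ := h fun i => if hi : i ∈ s then b (s.equivFin ⟨i, hi⟩) else false
  exact ⟨f, hf, fun i => by simpa using hfx _ (s.equivFin.symm i).2⟩

theorem Shatters.zero {α : Type*} {F : Set (α → ℝ)} (hF : F.Nonempty) : Shatters F 0 :=
  ⟨Fin.elim0, fun _ => ⟨hF.some, hF.some_mem, fun i => i.elim0⟩⟩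

theorem binOf_linComb_LTF_nonempty (d k : ℕ) : (binOf (linComb (LTF d) k)).Nonempty :=
  ⟨_, _, ⟨0, _, fun _ => threshold_mem_LTF 0 0, rfl⟩, 0, rfl⟩

/-- The point of `ℝ^(R + g + 1)` that stands for digit `l` of the number `i` in copy `j`: the
height `i` followed by the unit vectors `e_l` of `ℝ^R` and `e_j` of `ℝ^g`. -/
def gridPoint {R g : ℕ} (j : Fin g) (i : ℕ) (l : Fin R) : Fin (R + g + 1) → ℝ :=
  Fin.cons i (Fin.append (Pi.single l 1) (Pi.single j 1))

theorem sum_cons_append_mul_gridPoint {R g : ℕ} (a : Fin R → ℝ) (c : Fin g → ℝ) (j : Fin g) (i : ℕ)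
    (l : Fin R) :
    ∑ n, (Fin.cons 1 (Fin.append a c) : Fin (R + g + 1) → ℝ) n * gridPoint j i l n =
      i + a l + c j := by
  simp [gridPoint, Fin.sum_univ_succ, Fin.sum_univ_add, Pi.single_apply, add_assoc]

theorem add_ite_half_add_neg_mem_Ico {i t : ℕ} {p : Prop} [Decidable p] :
    (i + (if p then 0 else 1 / 2) + -t : ℝ) ∈ Set.Ico 0 (1 / 2) ↔ i = t ∧ p := by
  rw [Set.mem_Ico]
  rcases lt_trichotomy i t with h | rfl | h
  · have h' : (i + 1 : ℝ) ≤ t := by exact_mod_cast h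
    refine iff_of_false (fun hv => ?_) fun hp => h.ne hp.1
    have := hv.1
    split_ifs at this <;> linarith
  · split_ifs with hp <;> norm_num [hp]
  · have h' : (t + 1 : ℝ) ≤ i := by exact_mod_cast h
    refine iff_of_false (fun hv => ?_) fun hp => h.ne' hp.1
    have := hv.2
    split_ifs at this <;> linarith

theorem exists_mem_linComb_LTF_gridPoint_eq {R g M k : ℕ} (hk : 2 * M ≤ k)
    (b : Fin g → Fin M → Fin R → Bool) :
    ∃ f ∈ linComb (LTF (R + g + 1)) k, ∀ (j : Fin g) (i : Fin M) (l : Fin R),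
      (i : ℕ).testBit l → f (gridPoint j i l) = if b j i l then 1 else 0 := by
  choose σ hσ using fun j => exists_perm_testBit_eq (b j)
  let θ (s : Fin M) : Fin (R + g + 1) → ℝ :=
    Fin.cons 1 (Fin.append (fun l => if (s : ℕ).testBit l then 0 else 1 / 2)
      fun j => -((σ j).symm s : ℕ))
  refine ⟨_, sum_slab_mem_linComb (by rwa [Fintype.card_fin]) θ
    (a := 0) (b := fun _ => 1 / 2) fun _ => one_half_pos.le, fun j i l hil => ?_⟩
  have fires_iff (s : Fin M) : ∑ n, θ s n * gridPoint j i l n ∈ Set.Ico 0 (1 / 2) ↔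
      s = σ j i ∧ (s : ℕ).testBit l := by
    rw [sum_cons_append_mul_gridPoint, add_ite_half_add_neg_mem_Ico, Fin.val_inj,
      Equiv.eq_symm_apply, eq_comm]
  simp only [Pi.zero_apply, fires_iff]
  rw [Fintype.sum_eq_single (σ j i) fun s hs => if_neg fun h => hs h.1]
  simp only [true_and, hσ j i l hil]

theorem shatters_binOf_linComb_LTF {R g M k : ℕ} (hM : M ≤ 2 ^ R) (hk : 2 * M ≤ k) :
    Shatters (binOf (linComb (LTF (R + g + 1)) k)) (g * digitTotal M) := by
  let P : Finset (Fin g × Σ _ : Fin M, Fin R) :=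
    Finset.univ ×ˢ Finset.univ.sigma fun i : Fin M => {l : Fin R | (i : ℕ).testBit l}
  have hP : P.card = g * digitTotal M := by
    simp only [P, Finset.card_product, Finset.card_univ, Fintype.card_fin, Finset.card_sigma,
      card_filter_testBit ((Fin.is_lt _).trans_le hM), digitTotal, Finset.sum_range]
  rw [← hP]
  refine Shatters.of_finset (fun p => gridPoint p.1 p.2.1 p.2.2) P fun b => ?_
  obtain ⟨f, hf, hfb⟩ := exists_mem_linComb_LTF_gridPoint_eq hk fun j i l => b (j, ⟨i, l⟩)
  refine ⟨_, ⟨f, hf, 1, rfl⟩, fun p hp => ?_⟩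
  have hbit : (p.2.1 : ℕ).testBit p.2.2 := by simpa [P] using hp
  rw [hfb _ _ _ hbit]
  cases b p <;> norm_num

theorem rpow_div_two_sub_le_pow {b c : ℝ} (hb : 1 ≤ b) (hc : 1 / 2 ≤ c) (d : ℕ) :
    b ^ ((d : ℝ) / 2 - c) ≤ b ^ (d / 2) := by
  have hd : (d : ℝ) ≤ 2 * (d / 2 : ℕ) + 1 := by exact_mod_cast (by omega : d ≤ 2 * (d / 2) + 1)
  rw [← Real.rpow_natCast]
  exact Real.rpow_le_rpow_of_exponent_le hb (by linarith)

theorem vc_lower_bound_lin_threshold_general (d k : ℕ) (hk : k ≤ 2 ^ (d / 2)) :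
    ∃ m : ℕ, ((d : ℝ) * k / 8) * Real.logb 2 ((k : ℝ) / 4) ≤ (m : ℝ) ∧
      Shatters (binOf (linComb (LTF d) k)) m := by
  obtain hk4 | hk4 := lt_or_ge k 4
  · have hk1 : (k : ℝ) / 4 ≤ 1 := div_le_one_of_le₀ (by exact_mod_cast hk4.le) zero_le_four
    have hlog := Real.logb_nonpos one_lt_two (by positivity) hk1
    exact ⟨0, by simpa using mul_nonpos_of_nonneg_of_nonpos (by positivity) hlog,
      Shatters.zero (binOf_linComb_LTF_nonempty d k)⟩
  obtain ⟨R, hR⟩ : ∃ R, d / 2 = R + 1 :=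
    Nat.exists_eq_add_one_of_ne_zero fun h => by rw [h] at hk; omega
  obtain ⟨g, rfl⟩ : ∃ g, d = R + g + 1 := ⟨d - (R + 1), by omega⟩
  refine ⟨g * digitTotal (k / 2), ?_, shatters_binOf_linComb_LTF ?_ (by omega)⟩
  · have hg : (((R + g + 1 : ℕ) : ℝ) / 2) ≤ g := by
      rw [div_le_iff₀ two_pos]
      exact_mod_cast (by omega : R + g + 1 ≤ g * 2)
    calc ((R + g + 1 : ℕ) : ℝ) * k / 8 * Real.logb 2 (k / 4)
        = ((R + g + 1 : ℕ) : ℝ) / 2 * (k / 4 * Real.logb 2 (k / 4)) := by ring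
      _ ≤ ((R + g + 1 : ℕ) : ℝ) / 2 * digitTotal (k / 2) := by
        gcongr
        exact mul_logb_le_digitTotal hk4
      _ ≤ g * digitTotal (k / 2) := by gcongr
      _ = ((g * digitTotal (k / 2) : ℕ) : ℝ) := by push_cast; rfl
  · rw [hR, pow_succ] at hk
    omega

/-- For `d > 3` and `1 ≤ k ≤ 2^(d/2 - 2)`, the VC-dimension of
`bin(lin_k(𝒯))` is at least `(dk/8)·log₂(k/4)`: there are `m` points shattered
by `bin(lin_k(𝒯))` with `m ≥ (dk/8)·log₂(k/4)`. -/
theorem vc_lower_bound_lin_threshold (d k : ℕ) (hd : 3 < d) (hk : 1 ≤ k)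
    (hk2 : (k : ℝ) ≤ (2 : ℝ) ^ ((d : ℝ) / 2 - 2)) :
    ∃ m : ℕ, ((d : ℝ) * k / 8) * Real.logb 2 ((k : ℝ) / 4) ≤ (m : ℝ) ∧
      Shatters (binOf (linComb (LTF d) k)) m :=
  vc_lower_bound_lin_threshold_general d k <| by
    exact_mod_cast hk2.trans (rpow_div_two_sub_le_pow one_le_two (by norm_num) d)
end

section
/- Let d ≥ 2 and k ≥ 1. There exist points x_1,…,x_k ∈ ℝ^d that are shattered by bin(conv_{k+1}(𝒯)), the thresholded convex combinations of k+1 linear threshold functions on ℝ^d: for every labeling b ∈ {0,1}^k there exists h ∈ conv_{k+1}(𝒯) with 𝟙[h(x_i) ≥ 1/(k+1)] = b_i for all i = 1,…,k. Consequently, d_VC(bin(conv_{k+1}(𝒯))) ≥ k, the pseudodimension of conv_{k+1}(𝒯) is at least k, and the pseudodimension of conv(𝒯) = ∪_{k≥1} conv_k(𝒯) is infinite. -/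
/-- `conv_k(𝒢)`: convex combinations of `k` functions from `G`. -/
def convComb {α : Type*} (G : Set (α → ℝ)) (k : ℕ) : Set (α → ℝ) :=
  {f | ∃ (a : Fin k → ℝ) (g : Fin k → α → ℝ), (∀ i, 0 ≤ a i) ∧ (∑ i, a i = 1) ∧
    (∀ i, g i ∈ G) ∧ f = fun x => ∑ i, a i * g i x}

/-- `conv(𝒢) = ∪_{k ≥ 1} conv_k(𝒢)`: the convex hull of `G`. -/
def convHullFn {α : Type*} (G : Set (α → ℝ)) : Set (α → ℝ) :=
  {f | ∃ k, 1 ≤ k ∧ f ∈ convComb G k}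

/-- Pseudo-shattering of `m` points by a real-valued class; `d_P(F) ≥ m` iff
`PseudoShatters F m`. -/
def PseudoShatters {α : Type*} (F : Set (α → ℝ)) (m : ℕ) : Prop :=
  ∃ (x : Fin m → α) (t : Fin m → ℝ), ∀ b : Fin m → Bool, ∃ f ∈ F,
    ∀ i, (t i ≤ f (x i) ↔ b i = true)

/-!
Distinct points on a Euclidean sphere are cut out one at a time by half-spaces: by the equality
case of the Cauchy–Schwarz inequality, the tangent half-space at one of them contains no other. For
`d ≥ 2` the unit sphere is infinite, so it contains `k` such points. To realize a labeling, average
with weights `1 / (k + 1)` the indicators of the half-spaces cutting out the points labeled `1`,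
padded with the zero function; the average is `1 / (k + 1)` at those points and `0` at the others.
-/

section Classes

variable {α ι : Type*} {F G : Set (α → ℝ)} {k : ℕ}

/-- `ShattersAt F τ x`: the class `F` shatters the points `x i` once all its functions are
thresholded at the same level `τ`. This is stronger than both shattering by `binOf F`, where the
level may depend on the labeling, and pseudo-shattering by `F`, where it may depend on the point. -/
def ShattersAt (F : Set (α → ℝ)) (τ : ℝ) (x : ι → α) : Prop :=
  ∀ b : ι → Bool, ∃ f ∈ F, ∀ i, τ ≤ f (x i) ↔ b i = true

/-- `Isolates G x`: on the family of points `x`, the class `G` realizes the indicator function of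
each single index. -/
def Isolates [DecidableEq ι] (G : Set (α → ℝ)) (x : ι → α) : Prop :=
  ∀ i, ∃ g ∈ G, ∀ j, g (x j) = if j = i then 1 else 0

theorem ShattersAt.exists_ite_eq {τ : ℝ} {x : ι → α} (h : ShattersAt F τ x) (b : ι → Bool) :
    ∃ f ∈ F, ∀ i, (if f (x i) ≥ τ then (1 : ℝ) else 0) = if b i then (1 : ℝ) else 0 := by
  obtain ⟨f, hf, hfb⟩ := h b
  exact ⟨f, hf, fun i => if_congr (hfb i) rfl rfl⟩

theorem ShattersAt.shatters_binOf {τ : ℝ} {x : Fin k → α} (h : ShattersAt F τ x) :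
    Shatters (binOf F) k := by
  refine ⟨x, fun b => ?_⟩
  obtain ⟨f, hf, hfb⟩ := h.exists_ite_eq b
  exact ⟨_, ⟨f, hf, τ, rfl⟩, hfb⟩

theorem ShattersAt.pseudoShatters {τ : ℝ} {x : Fin k → α} (h : ShattersAt F τ x) :
    PseudoShatters F k :=
  ⟨x, fun _ => τ, h⟩

theorem PseudoShatters.mono (hFG : F ⊆ G) (h : PseudoShatters F k) : PseudoShatters G k := by
  obtain ⟨x, t, h⟩ := h
  refine ⟨x, t, fun b => ?_⟩
  obtain ⟨f, hf, hfb⟩ := h b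
  exact ⟨f, hFG hf, hfb⟩

theorem convComb_subset_convHullFn (hk : 1 ≤ k) : convComb G k ⊆ convHullFn G :=
  fun _ hf => ⟨k, hk, hf⟩

theorem average_mem_convComb [NeZero k] {g : Fin k → α → ℝ} (hg : ∀ i, g i ∈ G) :
    (fun x => (∑ i, g i x) / k) ∈ convComb G k := by
  refine ⟨fun _ => 1 / k, g, fun _ => by positivity, ?_, hg, ?_⟩
  · simp [NeZero.ne]
  · funext x
    rw [← Finset.mul_sum, one_div_mul_eq_div]

theorem Isolates.shattersAt_convComb {x : Fin k → α} (hx : Isolates G x) (h₀ : 0 ∈ G) :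
    ShattersAt (convComb G (k + 1)) (1 / ((k : ℝ) + 1)) x := by
  intro b
  choose g hgG hgx using hx
  let f : Fin (k + 1) → α → ℝ := Fin.cons 0 fun j => if b j then g j else 0
  have hfG : ∀ j, f j ∈ G := by
    refine Fin.cases h₀ fun j => ?_
    cases hb : b j <;> simp [f, hb, h₀, hgG]
  have hsum (i : Fin k) : ∑ j, f j (x i) = if b i then 1 else 0 := by
    have hterm (j : Fin k) : f j.succ (x i) = if i = j then (if b j then 1 else 0) else 0 := by
      cases hb : b j <;> simp [f, hb, hgx]
    simp only [Fin.sum_univ_succ, hterm, Finset.sum_ite_eq, Finset.mem_univ, if_true]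
    simp [f]
  have hk : (0 : ℝ) < k + 1 := by positivity
  refine ⟨_, average_mem_convComb hfG, fun i => ?_⟩
  rw [hsum, Nat.cast_add_one, div_le_div_iff_of_pos_right hk]
  cases b i <;> simp

end Classes

section Sphere

variable {n : Type*} [Fintype n]

theorem dotProduct_self_le_dotProduct_iff {R : Type*} [CommRing R] [LinearOrder R]
    [IsStrictOrderedRing R] {u v : n → R} (h : u ⬝ᵥ u = v ⬝ᵥ v) :
    u ⬝ᵥ u ≤ u ⬝ᵥ v ↔ u = v := by
  refine ⟨fun hle => ?_, fun huv => by rw [huv]⟩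
  have hexpand : (u - v) ⬝ᵥ (u - v) = 2 * (u ⬝ᵥ u - u ⬝ᵥ v) := by
    rw [sub_dotProduct, dotProduct_sub, dotProduct_sub, dotProduct_comm v u, ← h]
    ring
  have hnonneg : 0 ≤ (u - v) ⬝ᵥ (u - v) := Finset.sum_nonneg fun i _ => mul_self_nonneg _
  exact sub_eq_zero.mp (dotProduct_self_eq_zero.mp (by linarith))

theorem infinite_dotProduct_self_eq_one [Nontrivial n] :
    {x : n → ℝ | x ⬝ᵥ x = 1}.Infinite := by
  classical
  obtain ⟨i, j, hij⟩ := exists_pair_ne n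
  let circle (φ : ℝ) : n → ℝ := Pi.single i (Real.cos φ) + Pi.single j (Real.sin φ)
  have circle_apply (φ : ℝ) : circle φ i = Real.cos φ := by simp [circle, hij]
  refine Set.infinite_of_injOn_mapsTo (f := circle) (s := Set.Icc 0 Real.pi) ?_ ?_
    (Set.Icc_infinite Real.pi_pos)
  · intro φ hφ ψ hψ h
    exact Real.injOn_cos hφ hψ (by rw [← circle_apply, h, circle_apply])
  · intro φ _
    simp [circle, hij, hij.symm, ← sq]

end Sphere

section LinearThreshold

variable {d : ℕ}

theorem zero_mem_LTF : 0 ∈ LTF d :=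
  ⟨0, 1, by ext; simp⟩

theorem isolates_LTF {ι : Type*} [DecidableEq ι] {x : ι → Fin d → ℝ} {r : ℝ}
    (hinj : Function.Injective x) (hr : ∀ i, x i ⬝ᵥ x i = r) : Isolates (LTF d) x := by
  refine fun i => ⟨_, ⟨x i, x i ⬝ᵥ x i, rfl⟩, fun j => if_congr ?_ rfl rfl⟩
  calc x i ⬝ᵥ x i ≤ x i ⬝ᵥ x j
    _ ↔ x i = x j := dotProduct_self_le_dotProduct_iff ((hr i).trans (hr j).symm)
    _ ↔ j = i := hinj.eq_iff.trans eq_comm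

theorem exists_shattersAt_convComb_LTF (hd : 2 ≤ d) (k : ℕ) :
    ∃ x : Fin k → Fin d → ℝ, ShattersAt (convComb (LTF d) (k + 1)) (1 / ((k : ℝ) + 1)) x := by
  have : Nontrivial (Fin d) := Fin.nontrivial_iff_two_le.mpr hd
  let sphere : Set (Fin d → ℝ) := {x | x ⬝ᵥ x = 1}
  let point : ℕ ↪ sphere := infinite_dotProduct_self_eq_one.natEmbedding
  let x (i : Fin k) : Fin d → ℝ := point i
  have hinj : Function.Injective x :=
    Subtype.val_injective.comp (point.injective.comp Fin.val_injective)
  have hx : Isolates (LTF d) x := isolates_LTF hinj fun i => (point i).property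
  exact ⟨x, hx.shattersAt_convComb zero_mem_LTF⟩

end LinearThreshold

/-- For `d ≥ 2`, `k ≥ 1`: there are `k` points in `ℝ^d` such that for every
labeling `b ∈ {0,1}^k` some `h ∈ conv_{k+1}(𝒯)` satisfies `𝟙[h(x_i) ≥ 1/(k+1)] = b_i`.
Consequently `d_VC(bin(conv_{k+1}(𝒯))) ≥ k`, `d_P(conv_{k+1}(𝒯)) ≥ k`, and the
pseudodimension of `conv(𝒯)` is infinite. -/
theorem conv_hull_shatters (d k : ℕ) (hd : 2 ≤ d) (hk : 1 ≤ k) :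
    (∃ x : Fin k → (Fin d → ℝ), ∀ b : Fin k → Bool,
      ∃ h ∈ convComb (LTF d) (k + 1),
        ∀ i, (if h (x i) ≥ 1 / ((k : ℝ) + 1) then (1 : ℝ) else 0)
              = if b i then (1 : ℝ) else 0) ∧
    Shatters (binOf (convComb (LTF d) (k + 1))) k ∧
    PseudoShatters (convComb (LTF d) (k + 1)) k ∧
    ∀ m : ℕ, PseudoShatters (convHullFn (LTF d)) m := by
  obtain ⟨x, hx⟩ := exists_shattersAt_convComb_LTF hd k
  refine ⟨⟨x, hx.exists_ite_eq⟩, hx.shatters_binOf, hx.pseudoShatters, fun m => ?_⟩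
  obtain ⟨y, hy⟩ := exists_shattersAt_convComb_LTF hd m
  exact hy.pseudoShatters.mono (convComb_subset_convHullFn (Nat.le_add_left 1 m))
end

section
/- Let φ : ℝ → ℝ be c_φ-Lipschitz with φ(0) = 0, let B > 0, let f* : 𝒳 → [−B,B] be a fixed function, and for f ∈ conv(𝒢) define the regret r_f(x,y) = φ(f(x) − y) − φ(f*(x) − y) on 𝒳 × 𝒴 with 𝒴 ⊆ [−B,B]. Then for every n and every fixed sample (x_1,y_1),…,(x_n,y_n) ∈ 𝒳 × 𝒴: E_ε [ sup_{f ∈ conv(𝒢)} (1/n) Σ_{i=1}^n ε_i r_f(x_i, y_i) ] ≤ 2 c_φ · E_ε [ sup_{f ∈ conv(𝒢)} (1/n) Σ_{i=1}^n ε_i f(x_i) ] + 4 c_φ B / √n, where ε = (ε_1,…,ε_n) are independent Rademacher random variables (each equal to −1 or +1 with probability 1/2) and E_ε denotes expectation over ε. -/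
/-!
The Ledoux–Talagrand comparison argument, replacing one coordinate at a time. Flipping the sign
`ε a` permutes the sign patterns, so the sum over `ε` may be estimated on the pairs consisting of
`ε` and its flip at `a`. On such a pair the two suprema are `sup (h + w)` and `sup (h - w)`, where
`w` comes from the coordinate `a` and `h` from the others, and their sum is
`sup_{k, l} (h k + h l + |w k - w l|)`, which is monotone in the increments of `w`. The regret has
increments at most `c_φ` times those of `f`, because `f*` drops out of them; this yields the bound
with `c_φ` in place of `2 c_φ` and without the term `4 c_φ B / √n`.
-/

open Bornology Function Set
open scoped NNReal

section ConvexHull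

variable {α : Type*} (G : Set (α → ℝ))

lemma subset_convHullFn : G ⊆ convHullFn G := fun g hg =>
  ⟨1, le_rfl, fun _ => 1, fun _ => g, by simp, by simp, fun _ => hg, by simp⟩

lemma convHullFn_subset_convexHull : convHullFn G ⊆ convexHull ℝ G := by
  rintro f ⟨k, -, a, g, ha, hsum, hg, rfl⟩
  have hmem : ∑ i, a i • g i ∈ convexHull ℝ G :=
    (convex_convexHull ℝ G).sum_mem (fun i _ => ha i) hsum
      fun i _ => subset_convexHull ℝ G (hg i)
  convert hmem using 1
  ext x
  simp

variable {G}

lemma isBounded_image_convHullFn {E : Type*} [SeminormedAddCommGroup E] [NormedSpace ℝ E]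
    (L : (α → ℝ) →ₗ[ℝ] E) (hG : IsBounded (L '' G)) : IsBounded (L '' convHullFn G) := by
  refine (isBounded_convexHull.2 hG).subset ?_
  rw [← L.image_convexHull]
  exact image_mono (convHullFn_subset_convexHull G)

lemma isBounded_image_comp_of_mem_Icc {ι : Type*} {a b : ℝ} (hG : ∀ g ∈ G, ∀ t, g t ∈ Icc a b)
    (x : ι → α) : IsBounded ((fun f : α → ℝ => f ∘ x) '' G) := by
  refine forall_isBounded_image_eval_iff.1 fun i => (Metric.isBounded_Icc a b).subset ?_
  rw [image_image]
  exact image_subset_iff.2 fun g hg => hG g hg (x i)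

end ConvexHull

section RademacherSum

variable {ι κ : Type*} [Fintype ι]

/-- The Rademacher sum `∑ i, ε_i w_i` of the vector `w`, where the sign `ε_i` is encoded by a
Boolean: `true` stands for `+1` and `false` for `-1`. -/
def rademacherSum (ε : ι → Bool) (w : ι → ℝ) : ℝ :=
  ∑ i, (if ε i then (1 : ℝ) else -1) * w i

lemma rademacherSum_const_mul (ε : ι → Bool) (c : ℝ) (w : ι → ℝ) :
    rademacherSum ε (fun i => c * w i) = c * rademacherSum ε w := by
  simp only [rademacherSum, Finset.mul_sum, mul_left_comm]

lemma abs_rademacherSum_le (ε : ι → Bool) (w : ι → ℝ) :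
    |rademacherSum ε w| ≤ ∑ i, |w i| := by
  refine (Finset.abs_sum_le_sum_abs _ _).trans_eq (Finset.sum_congr rfl fun i _ => ?_)
  cases ε i <;> simp

lemma bddAbove_range_rademacherSum {u : κ → ι → ℝ} (hu : IsBounded (range u)) (ε : ι → Bool) :
    BddAbove (range fun k => rademacherSum ε (u k)) := by
  obtain ⟨C, hC⟩ := isBounded_iff_forall_norm_le.1 hu
  refine ⟨∑ _i : ι, C, forall_mem_range.2 fun k => ?_⟩
  calc rademacherSum ε (u k) ≤ ∑ i, |u k i| := (le_abs_self _).trans (abs_rademacherSum_le _ _)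
    _ ≤ ∑ _i : ι, C := Finset.sum_le_sum fun i _ =>
        (norm_le_pi_norm (u k) i).trans (hC _ (mem_range_self k))

variable [DecidableEq ι]

lemma rademacherSum_update (ε : ι → Bool) (a : ι) (b : Bool) (w : ι → ℝ) :
    rademacherSum (update ε a b) w =
      ∑ i ∈ Finset.univ.erase a, (if ε i then (1 : ℝ) else -1) * w i +
        (if b then (1 : ℝ) else -1) * w a := by
  rw [rademacherSum, ← Finset.sum_erase_add _ _ (Finset.mem_univ a), update_self]
  congr 1
  refine Finset.sum_congr rfl fun i hi => ?_
  rw [update_of_ne (Finset.ne_of_mem_erase hi)]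

lemma sum_update_true_add_update_false {M : Type*} [AddCommMonoid M] (F : (ι → Bool) → M)
    (a : ι) : ∑ ε, (F (update ε a true) + F (update ε a false)) = 2 • ∑ ε, F ε := by
  have hinv : Involutive fun ε : ι → Bool => update ε a (!ε a) := fun ε => by simp
  have hflip : ∑ ε, F (update ε a (!ε a)) = ∑ ε, F ε := Equiv.sum_comp hinv.toPerm F
  calc ∑ ε, (F (update ε a true) + F (update ε a false))
      = ∑ ε, (F (update ε a (ε a)) + F (update ε a (!ε a))) :=
        Finset.sum_congr rfl fun ε _ => by cases ε a <;> simp [add_comm]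
    _ = 2 • ∑ ε, F ε := by simp only [update_eq_self, Finset.sum_add_distrib, hflip, two_nsmul]

end RademacherSum

section Contraction

variable {ι κ : Type*}

lemma iSup_add_add_iSup_sub_le_of_abs_sub_le [Nonempty κ] {h v w : κ → ℝ}
    (hvw : ∀ k l, |v k - v l| ≤ |w k - w l|)
    (hadd : BddAbove (range fun k => h k + w k)) (hsub : BddAbove (range fun k => h k - w k)) :
    (⨆ k, (h k + v k)) + ⨆ k, (h k - v k) ≤ (⨆ k, (h k + w k)) + ⨆ k, (h k - w k) := by
  refine ciSup_add_ciSup_le fun k l => ?_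
  have hkl : v k - v l ≤ |w k - w l| := (le_abs_self _).trans (hvw k l)
  rcases abs_choice (w k - w l) with habs | habs
  · linarith [le_ciSup hadd k, le_ciSup hsub l]
  · linarith [le_ciSup hadd l, le_ciSup hsub k]

variable {u v : κ → ι → ℝ}

lemma isBounded_range_of_abs_sub_le (huv : ∀ k l i, |v k i - v l i| ≤ |u k i - u l i|)
    (hu : IsBounded (range u)) : IsBounded (range v) := by
  refine forall_isBounded_image_eval_iff.1 fun i => ?_
  have hui := forall_isBounded_image_eval_iff.2 hu i
  rw [← range_comp] at hui ⊢
  obtain ⟨C, hC⟩ := Metric.isBounded_range_iff.1 hui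
  exact Metric.isBounded_range_iff.2 ⟨C, fun k l => (huv k l i).trans (hC k l)⟩

variable [Fintype ι] [DecidableEq ι] [Nonempty κ]

lemma sum_iSup_rademacherSum_le_of_eq_off {a : ι} (hoff : ∀ k, ∀ i ≠ a, v k i = u k i)
    (ha : ∀ k l, |v k a - v l a| ≤ |u k a - u l a|) (hu : IsBounded (range u)) :
    ∑ ε, ⨆ k, rademacherSum ε (v k) ≤ ∑ ε, ⨆ k, rademacherSum ε (u k) := by
  let S (w : κ → ι → ℝ) (ε : ι → Bool) : ℝ := ⨆ k, rademacherSum ε (w k)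
  have pair_le (ε : ι → Bool) :
      S v (update ε a true) + S v (update ε a false) ≤
        S u (update ε a true) + S u (update ε a false) := by
    have hadd := bddAbove_range_rademacherSum hu (update ε a true)
    have hsub := bddAbove_range_rademacherSum hu (update ε a false)
    have hrest (k : κ) : ∑ i ∈ Finset.univ.erase a, (if ε i then (1 : ℝ) else -1) * v k i =
        ∑ i ∈ Finset.univ.erase a, (if ε i then (1 : ℝ) else -1) * u k i :=
      Finset.sum_congr rfl fun i hi => by rw [hoff k i (Finset.ne_of_mem_erase hi)]
    simp only [S, rademacherSum_update, hrest, if_true, Bool.false_eq_true, if_false, one_mul,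
      neg_one_mul, ← sub_eq_add_neg] at hadd hsub ⊢
    exact iSup_add_add_iSup_sub_le_of_abs_sub_le ha hadd hsub
  refine le_of_nsmul_le_nsmul_right two_ne_zero ?_
  calc 2 • ∑ ε, S v ε = ∑ ε, (S v (update ε a true) + S v (update ε a false)) :=
        (sum_update_true_add_update_false _ a).symm
    _ ≤ ∑ ε, (S u (update ε a true) + S u (update ε a false)) :=
        Finset.sum_le_sum fun ε _ => pair_le ε
    _ = 2 • ∑ ε, S u ε := sum_update_true_add_update_false _ a

theorem sum_iSup_rademacherSum_le_of_abs_sub_le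
    (huv : ∀ k l i, |v k i - v l i| ≤ |u k i - u l i|) (hu : IsBounded (range u)) :
    ∑ ε, ⨆ k, rademacherSum ε (v k) ≤ ∑ ε, ⨆ k, rademacherSum ε (u k) := by
  suffices hybrid : ∀ s : Finset ι,
      ∑ ε, ⨆ k, rademacherSum ε (s.piecewise (v k) (u k)) ≤ ∑ ε, ⨆ k, rademacherSum ε (u k) by
    simpa using hybrid Finset.univ
  intro s
  induction s using Finset.induction_on with
  | empty => simp
  | insert a s has ih =>
    refine le_trans (sum_iSup_rademacherSum_le_of_eq_off (a := a) ?_ ?_ ?_) ih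
    · intro k i hi
      simp [hi]
    · intro k l
      simpa [has] using huv k l a
    · refine isBounded_range_of_abs_sub_le (fun k l i => ?_) hu
      by_cases hi : i ∈ s
      · simpa [hi] using huv k l i
      · simp [hi]

end Contraction

section RademacherComplexity

variable {κ : Type*} {n : ℕ} {F : Set κ} {u v : κ → Fin n → ℝ}

/-- The empirical Rademacher complexity `E_ε sup_{k ∈ F} (1/n) ∑ i, ε_i u_k(i)` of the vectors
`u k`, `k ∈ F`. For a class `F` of functions on a sample `x` take `u f i = f (x i)`; an arbitrary
`u` also covers classes of losses or regrets indexed by `F`. -/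
noncomputable def rademacherComplexity (F : Set κ) (u : κ → Fin n → ℝ) : ℝ :=
  (1 / 2 ^ n : ℝ) * ∑ ε : Fin n → Bool,
    sSup ((fun k => (1 / (n : ℝ)) * rademacherSum ε (u k)) '' F)

lemma rademacherComplexity_eq_sum_iSup (F : Set κ) (u : κ → Fin n → ℝ) :
    rademacherComplexity F u =
      1 / 2 ^ n * (1 / n * ∑ ε : Fin n → Bool, ⨆ k : F, rademacherSum ε (u k)) := by
  have hn : (0 : ℝ) ≤ 1 / n := by positivity
  simp only [rademacherComplexity, sSup_image', Finset.mul_sum, Real.mul_iSup_of_nonneg hn]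

theorem rademacherComplexity_le_mul (hF : F.Nonempty) (hu : IsBounded (u '' F)) {c : ℝ}
    (hc : 0 ≤ c) (huv : ∀ k ∈ F, ∀ l ∈ F, ∀ i, |v k i - v l i| ≤ c * |u k i - u l i|) :
    rademacherComplexity F v ≤ c * rademacherComplexity F u := by
  have := hF.to_subtype
  rw [image_eq_range] at hu
  have hincr (k l : F) (i : Fin n) : |v k i - v l i| ≤ |c * u k i - c * u l i| := by
    rw [← mul_sub, abs_mul, abs_of_nonneg hc]
    exact huv k k.2 l l.2 i
  have hscaled : IsBounded (range fun (k : F) i => c * u k i) := by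
    have := hu.smul₀ c
    rwa [← range_smul] at this
  have hsum := sum_iSup_rademacherSum_le_of_abs_sub_le (v := fun k : F => v k) hincr hscaled
  simp only [rademacherSum_const_mul, ← Real.mul_iSup_of_nonneg hc, ← Finset.mul_sum] at hsum
  rw [rademacherComplexity_eq_sum_iSup, rademacherComplexity_eq_sum_iSup, mul_left_comm c,
    mul_left_comm c]
  gcongr

lemma rademacherComplexity_nonneg (hF : F.Nonempty) (hu : IsBounded (u '' F)) :
    0 ≤ rademacherComplexity F u := by
  have hzero : rademacherComplexity F (fun _ _ => 0 : κ → Fin n → ℝ) = 0 := by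
    simp [rademacherComplexity, rademacherSum, hF.image_const]
  simpa [hzero] using
    rademacherComplexity_le_mul (v := fun _ _ => 0) hF hu zero_le_one fun k _ l _ i => by simp

end RademacherComplexity

theorem rademacher_regret_contraction_general {α : Type*} {F : Set (α → ℝ)} (hF : F.Nonempty)
    {n : ℕ} {x : Fin n → α} (hbdd : IsBounded ((fun f : α → ℝ => f ∘ x) '' F))
    {φ : ℝ → ℝ} {K : ℝ≥0} (hφ : LipschitzWith K φ) (fstar : α → ℝ) (y : Fin n → ℝ) :
    rademacherComplexity F (fun f i => φ (f (x i) - y i) - φ (fstar (x i) - y i)) ≤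
      K * rademacherComplexity F (fun f => f ∘ x) := by
  refine rademacherComplexity_le_mul hF hbdd K.2 fun f _ g _ i => ?_
  simpa [Real.dist_eq] using hφ.dist_le_mul (f (x i) - y i) (g (x i) - y i)

/-- Rademacher contraction-type bound for the regret class
`r_f(x,y) = φ(f(x) - y) - φ(f*(x) - y)`: the empirical Rademacher complexity of
the regret class is at most `2 c_φ` times the empirical Rademacher complexity of
`conv(𝒢)` plus `4 c_φ B / √n`.  The expectation over the Rademacher vector
`ε ∈ {-1,1}^n` is written as the average over all `2^n` sign patterns. -/
theorem rademacher_regret_contraction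
    (d : ℕ) (X : Set (Fin d → ℝ)) (B : ℝ) (hB : 0 < B)
    (Y : Set ℝ) (hY : Y ⊆ Set.Icc (-B) B)
    (G : Set (↥X → ℝ)) (hGne : G.Nonempty)
    (hGB : ∀ g ∈ G, ∀ x, g x ∈ Set.Icc (-B) B)
    (φ : ℝ → ℝ) (cφ : ℝ) (hcφ : 0 ≤ cφ)
    (hφ : ∀ u v, |φ u - φ v| ≤ cφ * |u - v|) (hφ0 : φ 0 = 0)
    (fstar : ↥X → ℝ) (hfs : ∀ x, fstar x ∈ Set.Icc (-B) B)
    (n : ℕ) (hn : 0 < n) (x : Fin n → ↥X) (y : Fin n → ℝ) (hy : ∀ i, y i ∈ Y) :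
    (1 / 2 ^ n : ℝ) * ∑ ε : Fin n → Bool,
        sSup ((fun f : ↥X → ℝ => (1 / (n : ℝ)) * ∑ i,
            (if ε i then (1 : ℝ) else -1) *
              (φ (f (x i) - y i) - φ (fstar (x i) - y i))) '' convHullFn G)
      ≤ 2 * cφ *
          ((1 / 2 ^ n : ℝ) * ∑ ε : Fin n → Bool,
            sSup ((fun f : ↥X → ℝ => (1 / (n : ℝ)) * ∑ i,
                (if ε i then (1 : ℝ) else -1) * f (x i)) '' convHullFn G))
        + 4 * cφ * B / Real.sqrt n := by
  have hne : (convHullFn G).Nonempty := hGne.mono (subset_convHullFn G)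
  have hbdd : IsBounded ((fun f : ↥X → ℝ => f ∘ x) '' convHullFn G) :=
    isBounded_image_convHullFn (LinearMap.funLeft ℝ ℝ x) (isBounded_image_comp_of_mem_Icc hGB x)
  have hcR := mul_nonneg hcφ (rademacherComplexity_nonneg hne hbdd)
  have hrem : 0 ≤ 4 * cφ * B / Real.sqrt n := by positivity
  calc
    _ ≤ cφ * rademacherComplexity (convHullFn G) (fun f => f ∘ x) :=
      rademacher_regret_contraction_general (K := ⟨cφ, hcφ⟩) hne hbdd (.of_dist_le_mul hφ) fstar y
    _ ≤ 2 * cφ * rademacherComplexity (convHullFn G) (fun f => f ∘ x) +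
        4 * cφ * B / Real.sqrt n := by linarith
end

section
/- Let B > 0, p ≥ 1, C ≥ 1, and let 𝒢 ⊆ [−B,B]^𝒳 be a nonempty class of functions such that for every n ≥ 1, every x = (x_1,…,x_n) ∈ 𝒳^n and every ε ∈ (0, CB], there exists a finite set S of functions 𝒳 → ℝ with |S| ≤ (CB/ε)^{2p} such that every f ∈ 𝒢 has some g ∈ S with d_x(f,g) ≤ ε, where d_x(f,g) = ((1/n) Σ_{i=1}^n (f(x_i) − g(x_i))²)^{1/2}. Then there exists a constant D > 0 depending only on C such that for every n and every x ∈ 𝒳^n: E_ε [ sup_{f ∈ 𝒢} (1/n) Σ_{i=1}^n ε_i f(x_i) ] ≤ D B √(p/n), where ε_1,…,ε_n are independent Rademacher random variables (each equal to −1 or +1 with probability 1/2). -/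
universe u

/-!
A Rademacher sum `∑ i, σ i * v i` is a centred process in `v ∈ ℝⁿ` whose increments are sub-Gaussian
for the Euclidean distance, and after scaling by `1/√n` the evaluation map `f ↦ (f (x i))ᵢ` is an
isometry from `d_x`. It therefore suffices to bound the expected maximum of such a process over a
finite set `F` that has `ε`-nets of cardinality at most `(r/ε)^d`.

Approximate `F` by nets of radius `r, r/2, …, r/2^K`, keeping only the net points chosen by some
point of `F`, so that consecutive nets are within `3r/2^(k+1)` of each other. By Massart's lemma,
passing from one net to the next costs at most `3r/2^(k+1) * √(2 log (2^(k+1))^d)`, and these costs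
sum to `O(r √d)`. The last passage, from the net of radius `r/2^K` to `F`, costs at most
`r/2^K * √(2 log |F|)`, which tends to `0` as `K → ∞`.
-/

open MeasureTheory ProbabilityTheory
open scoped NNReal Finset

section Maxima

variable {Ω κ : Type*} [MeasurableSpace Ω] {μ : Measure Ω}

lemma integrable_finset_sup' {T : Finset κ} (hT : T.Nonempty) {X : κ → Ω → ℝ}
    (hX : ∀ t ∈ T, Integrable (X t) μ) : Integrable (fun ω => T.sup' hT (X · ω)) μ := by
  have h : Integrable (T.sup' hT X) μ :=
    Finset.sup'_induction hT X (p := fun Y => Integrable Y μ) (fun _ hY _ hZ => hY.sup hZ) hX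
  exact h.congr (.of_forall fun ω => Finset.sup'_apply hT X ω)

lemma exp_mul_sup'_le_sum {T : Finset κ} (hT : T.Nonempty) (a : κ → ℝ) (l : ℝ) :
    Real.exp (l * T.sup' hT a) ≤ ∑ t ∈ T, Real.exp (l * a t) := by
  obtain ⟨t, ht, hmax⟩ := T.exists_mem_eq_sup' hT a
  rw [hmax]
  exact Finset.single_le_sum (f := fun t => Real.exp (l * a t)) (fun _ _ => (Real.exp_pos _).le) ht

lemma hasSubgaussianMGF_mono {X : Ω → ℝ} {c d : ℝ≥0} (hX : HasSubgaussianMGF X c μ)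
    (hcd : c ≤ d) : HasSubgaussianMGF X d μ where
  integrable_exp_mul := hX.integrable_exp_mul
  mgf_le l := (hX.mgf_le l).trans (by gcongr)

variable [IsProbabilityMeasure μ]

lemma mul_integral_sup'_le_log_card_add {T : Finset κ} (hT : T.Nonempty) {X : κ → Ω → ℝ} {c : ℝ≥0}
    (hX : ∀ t ∈ T, HasSubgaussianMGF (X t) c μ) (l : ℝ) :
    l * ∫ ω, T.sup' hT (X · ω) ∂μ ≤ Real.log #T + c * l ^ 2 / 2 := by
  have hsup := integrable_finset_sup' hT fun t ht => (hX t ht).integrable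
  have hsum : Integrable (fun ω => ∑ t ∈ T, Real.exp (l * X t ω)) μ :=
    integrable_finsetSum _ fun t ht => (hX t ht).integrable_exp_mul l
  have hexp : Integrable (fun ω => Real.exp (l * T.sup' hT (X · ω))) μ :=
    hsum.mono' (Real.continuous_exp.comp_aestronglyMeasurable (hsup.1.const_mul l)) <|
      .of_forall fun ω => by
        rw [Real.norm_of_nonneg (Real.exp_pos _).le]
        exact exp_mul_sup'_le_sum hT _ l
  have hcard : (0 : ℝ) < #T := by exact_mod_cast hT.card_pos
  rw [← Real.exp_le_exp, Real.exp_add, Real.exp_log hcard]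
  calc Real.exp (l * ∫ ω, T.sup' hT (X · ω) ∂μ)
      = Real.exp (∫ ω, l * T.sup' hT (X · ω) ∂μ) := by rw [integral_const_mul]
    _ ≤ ∫ ω, Real.exp (l * T.sup' hT (X · ω)) ∂μ :=
        convexOn_exp.map_integral_le Real.continuous_exp.continuousOn isClosed_univ
          (.of_forall fun _ => Set.mem_univ _) (hsup.const_mul l) hexp
    _ ≤ ∫ ω, ∑ t ∈ T, Real.exp (l * X t ω) ∂μ :=
        integral_mono hexp hsum fun ω => exp_mul_sup'_le_sum hT _ l
    _ = ∑ t ∈ T, mgf (X t) μ l := integral_finsetSum _ fun t ht => (hX t ht).integrable_exp_mul l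
    _ ≤ ∑ t ∈ T, Real.exp (c * l ^ 2 / 2) := Finset.sum_le_sum fun t ht => (hX t ht).mgf_le l
    _ = #T * Real.exp (c * l ^ 2 / 2) := by rw [Finset.sum_const, nsmul_eq_mul]

/-- **Massart's lemma**. -/
lemma integral_sup'_le_sqrt_log_card {T : Finset κ} (hT : T.Nonempty) {X : κ → Ω → ℝ} {c : ℝ≥0}
    (hX : ∀ t ∈ T, HasSubgaussianMGF (X t) c μ) :
    ∫ ω, T.sup' hT (X · ω) ∂μ ≤ √(2 * c * Real.log #T) := by
  -- The bound for every `l` says that a quadratic polynomial in `l` is nonnegative.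
  have hdiscrim := discrim_le_zero (a := (c : ℝ) / 2) (b := -∫ ω, T.sup' hT (X · ω) ∂μ)
    (c := Real.log #T) fun l => by linarith [mul_integral_sup'_le_log_card_add hT hX l]
  refine Real.le_sqrt_of_sq_le ?_
  rw [discrim] at hdiscrim
  linarith

end Maxima

lemma sum_range_succ_mul_geometric_two_le (K : ℕ) :
    ∑ k ∈ Finset.range K, ((k + 1 : ℕ) : ℝ) * (1 / 2) ^ (k + 1) ≤ 2 := by
  have hsum : HasSum (fun k : ℕ => (k : ℝ) * (1 / 2) ^ k) 2 := by
    have h := hasSum_coe_mul_geometric_of_norm_lt_one (r := (1 / 2 : ℝ)) (by norm_num)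
    norm_num at h ⊢
    exact h
  calc ∑ k ∈ Finset.range K, ((k + 1 : ℕ) : ℝ) * (1 / 2) ^ (k + 1)
      = ∑ k ∈ Finset.range (K + 1), (k : ℝ) * (1 / 2) ^ k := by simp [Finset.sum_range_succ']
    _ ≤ 2 := sum_le_hasSum _ (fun _ _ => by positivity) hsum

lemma sqrt_two_mul_log_le_of_le_two_pow_rpow {m k : ℕ} {d : ℝ} (hd : 0 ≤ d)
    (hm : (m : ℝ) ≤ (2 ^ k) ^ d) : √(2 * Real.log m) ≤ k * √(2 * d) := by
  obtain rfl | hmpos := m.eq_zero_or_pos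
  · simpa using mul_nonneg k.cast_nonneg (Real.sqrt_nonneg (2 * d))
  have hlog_two : Real.log 2 ≤ 1 := by linarith [Real.log_le_sub_one_of_pos (x := 2) two_pos]
  have hk : (k : ℝ) ≤ k ^ 2 := by exact_mod_cast Nat.le_self_pow two_ne_zero k
  have hlog : Real.log m ≤ k ^ 2 * d :=
    calc Real.log m ≤ Real.log ((2 ^ k) ^ d) := Real.log_le_log (by exact_mod_cast hmpos) hm
      _ = k * d * Real.log 2 := by rw [Real.log_rpow (by positivity), Real.log_pow]; ring
      _ ≤ k ^ 2 * d * 1 := by gcongr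
      _ = k ^ 2 * d := mul_one _
  calc √(2 * Real.log m) ≤ √(k ^ 2 * (2 * d)) := Real.sqrt_le_sqrt (by linarith)
    _ = k * √(2 * d) := by rw [Real.sqrt_mul (sq_nonneg _), Real.sqrt_sq (Nat.cast_nonneg k)]

section SubgaussianProcess

variable {Ω E : Type*} [MeasurableSpace Ω] [PseudoMetricSpace E]

/-- A centred process on a pseudometric space whose increments are sub-Gaussian with variance proxy
the squared distance: the processes to which Dudley's chaining applies. Integrability is a field
because the integral of a non-integrable function is `0` by convention. -/
structure IsCenteredSubgaussianProcess (X : E → Ω → ℝ) (μ : Measure Ω) : Prop where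
  integrable : ∀ t, Integrable (X t) μ
  integral_eq_zero : ∀ t, ∫ ω, X t ω ∂μ = 0
  hasSubgaussianMGF_sub : ∀ s t, HasSubgaussianMGF (X s - X t) (nndist s t ^ 2) μ

/-- For every `ε ∈ (0, r]`, the set `V` is covered by at most `(r / ε) ^ d` closed balls of radius
`ε`, that is, `V` has metric entropy of dimension `d` below scale `r`. The centres need not lie
in `V`. -/
def HasPolynomialCover (V : Set E) (r d : ℝ) : Prop :=
  ∀ ε, 0 < ε → ε ≤ r → ∃ N : Finset E, (#N : ℝ) ≤ (r / ε) ^ d ∧ ∀ t ∈ V, ∃ s ∈ N, dist t s ≤ ε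

lemma HasPolynomialCover.mono {V W : Set E} {r d : ℝ} (hV : HasPolynomialCover V r d)
    (hWV : W ⊆ V) : HasPolynomialCover W r d := fun ε hε hεr =>
  (hV ε hε hεr).imp fun _ hN => ⟨hN.1, fun t ht => hN.2 t (hWV ht)⟩

lemma HasPolynomialCover.exists_dyadic_chain {F : Finset E} (hF : F.Nonempty) {r d : ℝ}
    (hr : 0 < r) (hcover : HasPolynomialCover (F : Set E) r d) :
    ∃ T : ℕ → Finset E, (∀ k, (T k).Nonempty) ∧ (∀ k : ℕ, (#(T k) : ℝ) ≤ (2 ^ k) ^ d) ∧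
      (∀ k, ∀ t ∈ T (k + 1), ∃ s ∈ T k, dist t s ≤ 3 * r / 2 ^ (k + 1)) ∧
      ∀ k, ∀ t ∈ F, ∃ s ∈ T k, dist t s ≤ r / 2 ^ k := by
  classical
  choose N hNcard hN using fun k : ℕ => hcover (r / 2 ^ k) (by positivity)
    (div_le_self hr.le (one_le_pow₀ one_le_two))
  choose! π hπN hπ using hN
  refine ⟨fun k => F.image (π k), fun k => hF.image (π k), fun k => ?_, fun k t ht => ?_,
    fun k t ht => ⟨π k t, Finset.mem_image_of_mem _ ht, hπ k t ht⟩⟩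
  · have hsub : F.image (π k) ⊆ N k := Finset.image_subset_iff.mpr (hπN k)
    calc (#(F.image (π k)) : ℝ) ≤ #(N k) := by exact_mod_cast Finset.card_le_card hsub
      _ ≤ (2 ^ k) ^ d := by simpa only [div_div_cancel₀ hr.ne'] using hNcard k
  · obtain ⟨f, hf, rfl⟩ := Finset.mem_image.mp ht
    refine ⟨π k f, Finset.mem_image_of_mem _ hf, ?_⟩
    calc dist (π (k + 1) f) (π k f) ≤ dist f (π (k + 1) f) + dist f (π k f) :=
          dist_triangle_left _ _ _
      _ ≤ r / 2 ^ (k + 1) + r / 2 ^ k := add_le_add (hπ _ f hf) (hπ k f hf)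
      _ = 3 * r / 2 ^ (k + 1) := by rw [pow_succ]; field_simp; ring

namespace IsCenteredSubgaussianProcess

variable {μ : Measure Ω} {X : E → Ω → ℝ}

lemma integral_sup'_eq_zero_of_card_le_one (hX : IsCenteredSubgaussianProcess X μ) {T : Finset E}
    (hT : T.Nonempty) (hcard : #T ≤ 1) : ∫ ω, T.sup' hT (X · ω) ∂μ = 0 := by
  obtain ⟨t, rfl⟩ := Finset.card_eq_one.mp (hcard.antisymm hT.card_pos)
  simpa only [Finset.sup'_singleton] using hX.integral_eq_zero t

variable [IsProbabilityMeasure μ]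

lemma integral_sup'_le_add (hX : IsCenteredSubgaussianProcess X μ) {S T : Finset E}
    (hS : S.Nonempty) (hT : T.Nonempty) {δ : ℝ} (hST : ∀ t ∈ T, ∃ s ∈ S, dist t s ≤ δ) :
    ∫ ω, T.sup' hT (X · ω) ∂μ ≤ ∫ ω, S.sup' hS (X · ω) ∂μ + δ * √(2 * Real.log #T) := by
  have hδ : 0 ≤ δ :=
    let ⟨_, ht⟩ := hT; let ⟨_, _, hs⟩ := hST _ ht; dist_nonneg.trans hs
  lift δ to ℝ≥0 using hδ
  choose! π hπS hπδ using hST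
  have hsub : ∀ t ∈ T, HasSubgaussianMGF (X t - X (π t)) (δ ^ 2) μ := fun t ht =>
    hasSubgaussianMGF_mono (hX.hasSubgaussianMGF_sub t (π t)) (by gcongr; exact hπδ t ht)
  have hSint := integrable_finset_sup' hS fun s _ => hX.integrable s
  have hTint := integrable_finset_sup' hT fun t _ => hX.integrable t
  have hsubint := integrable_finset_sup' hT fun t ht => (hsub t ht).integrable
  calc ∫ ω, T.sup' hT (X · ω) ∂μ
      ≤ ∫ ω, (S.sup' hS (X · ω) + T.sup' hT fun t => (X t - X (π t)) ω) ∂μ := by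
        refine integral_mono hTint (hSint.add hsubint) fun ω => Finset.sup'_le hT _ fun t ht => ?_
        have hS_le := Finset.le_sup' (X · ω) (hπS t ht)
        have hT_le := Finset.le_sup' (fun t => (X t - X (π t)) ω) ht
        rw [Pi.sub_apply] at hT_le
        linarith
    _ ≤ ∫ ω, S.sup' hS (X · ω) ∂μ + √(2 * (δ ^ 2 : ℝ≥0) * Real.log #T) := by
        rw [integral_add hSint hsubint]
        gcongr
        exact integral_sup'_le_sqrt_log_card hT hsub
    _ = ∫ ω, S.sup' hS (X · ω) ∂μ + δ * √(2 * Real.log #T) := by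
        rw [NNReal.coe_pow, mul_right_comm, mul_comm, Real.sqrt_mul (by positivity),
          Real.sqrt_sq δ.coe_nonneg]

lemma integral_sup'_le_add_sum (hX : IsCenteredSubgaussianProcess X μ) {T : ℕ → Finset E}
    (hT : ∀ k, (T k).Nonempty) {δ : ℕ → ℝ}
    (hδ : ∀ k, ∀ t ∈ T (k + 1), ∃ s ∈ T k, dist t s ≤ δ k) (K : ℕ) :
    ∫ ω, (T K).sup' (hT K) (X · ω) ∂μ ≤ ∫ ω, (T 0).sup' (hT 0) (X · ω) ∂μ +
      ∑ k ∈ Finset.range K, δ k * √(2 * Real.log #(T (k + 1))) := by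
  induction K with
  | zero => simp
  | succ K ih =>
    rw [Finset.sum_range_succ, ← add_assoc]
    exact (hX.integral_sup'_le_add (hT K) (hT (K + 1)) (hδ K)).trans (by gcongr)

lemma integral_sup'_le_of_dyadic (hX : IsCenteredSubgaussianProcess X μ) {F : Finset E}
    (hF : F.Nonempty) {r d : ℝ} (hr : 0 < r) (hd : 0 ≤ d)
    (hcover : HasPolynomialCover (F : Set E) r d) (K : ℕ) :
    ∫ ω, F.sup' hF (X · ω) ∂μ ≤ 6 * r * √(2 * d) + r / 2 ^ K * √(2 * Real.log #F) := by
  obtain ⟨T, hT, hcard, hchain, hnear⟩ := hcover.exists_dyadic_chain hF hr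
  have hroot : #(T 0) ≤ 1 := by simpa using hcard 0
  calc ∫ ω, F.sup' hF (X · ω) ∂μ
      ≤ ∫ ω, (T K).sup' (hT K) (X · ω) ∂μ + r / 2 ^ K * √(2 * Real.log #F) :=
        hX.integral_sup'_le_add (hT K) hF (hnear K)
    _ ≤ ∑ k ∈ Finset.range K, 3 * r / 2 ^ (k + 1) * √(2 * Real.log #(T (k + 1)))
          + r / 2 ^ K * √(2 * Real.log #F) := by
        gcongr
        simpa only [hX.integral_sup'_eq_zero_of_card_le_one (hT 0) hroot, zero_add]
          using hX.integral_sup'_le_add_sum hT hchain K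
    _ ≤ ∑ k ∈ Finset.range K, 3 * r / 2 ^ (k + 1) * ((k + 1 : ℕ) * √(2 * d))
          + r / 2 ^ K * √(2 * Real.log #F) := by
        gcongr with k
        exact sqrt_two_mul_log_le_of_le_two_pow_rpow hd (hcard (k + 1))
    _ = 3 * r * √(2 * d) * ∑ k ∈ Finset.range K, ((k + 1 : ℕ) : ℝ) * (1 / 2) ^ (k + 1)
          + r / 2 ^ K * √(2 * Real.log #F) := by
        rw [Finset.mul_sum]
        congr! 2 with k
        rw [one_div_pow]
        ring
    _ ≤ 3 * r * √(2 * d) * 2 + r / 2 ^ K * √(2 * Real.log #F) := by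
        gcongr
        exact sum_range_succ_mul_geometric_two_le K
    _ = 6 * r * √(2 * d) + r / 2 ^ K * √(2 * Real.log #F) := by ring

/-- **Dudley's entropy bound**. -/
theorem integral_sup'_le_of_hasPolynomialCover (hX : IsCenteredSubgaussianProcess X μ)
    {F : Finset E} (hF : F.Nonempty) {r d : ℝ} (hr : 0 < r) (hd : 0 ≤ d)
    (hcover : HasPolynomialCover (F : Set E) r d) :
    ∫ ω, F.sup' hF (X · ω) ∂μ ≤ 6 * r * √(2 * d) := by
  have hrem : Filter.Tendsto (fun K : ℕ => r / 2 ^ K * √(2 * Real.log #F)) .atTop (nhds 0) := by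
    simpa using (tendsto_const_nhds.div_atTop
      (tendsto_pow_atTop_atTop_of_one_lt (one_lt_two (α := ℝ)))).mul_const (√(2 * Real.log #F))
  simpa using ge_of_tendsto' (hrem.const_add (6 * r * √(2 * d)))
    fun K => hX.integral_sup'_le_of_dyadic hF hr hd hcover K

end IsCenteredSubgaussianProcess

end SubgaussianProcess

lemma integral_sSup_image_le_of_forall_finset {Ω T : Type*} [MeasurableSpace Ω] [Finite Ω]
    [MeasurableSingletonClass Ω] {μ : Measure Ω} [IsProbabilityMeasure μ] {X : T → Ω → ℝ}
    {V : Set T} (hV : V.Nonempty) {b : ℝ}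
    (h : ∀ (F : Finset T) (hF : F.Nonempty), ↑F ⊆ V → ∫ ω, F.sup' hF (X · ω) ∂μ ≤ b) :
    ∫ ω, sSup ((X · ω) '' V) ∂μ ≤ b := by
  classical
  have := Fintype.ofFinite Ω
  have := nonempty_of_isProbabilityMeasure μ
  refine le_of_forall_pos_le_add fun η hη => ?_
  have hnear : ∀ ω, ∃ t ∈ V, sSup ((X · ω) '' V) - η < X t ω := fun ω => by
    simpa using exists_lt_of_lt_csSup (hV.image (X · ω)) (sub_lt_self _ hη)
  choose t htV ht using hnear
  have hF : (Finset.univ.image t).Nonempty := Finset.univ_nonempty.image t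
  calc ∫ ω, sSup ((X · ω) '' V) ∂μ
      ≤ ∫ ω, ((Finset.univ.image t).sup' hF (X · ω) + η) ∂μ := by
        refine integral_mono .of_finite .of_finite fun ω => ?_
        have hle := Finset.le_sup' (X · ω) (Finset.mem_image_of_mem t (Finset.mem_univ ω))
        linarith [ht ω]
    _ = ∫ ω, (Finset.univ.image t).sup' hF (X · ω) ∂μ + η := by
        rw [integral_add .of_finite .of_finite]
        simp
    _ ≤ b + η := by
        gcongr
        exact h _ hF (by simpa [Set.range_subset_iff] using htV)

lemma integral_uniformOn_univ {Ω : Type*} [MeasurableSpace Ω] [Fintype Ω] [Nonempty Ω]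
    [MeasurableSingletonClass Ω] (f : Ω → ℝ) :
    ∫ ω, f ω ∂uniformOn Set.univ = 1 / Fintype.card Ω * ∑ ω, f ω := by
  rw [integral_fintype .of_finite, Finset.mul_sum]
  simp [measureReal_def, uniformOn_univ]

section Rademacher

variable {ι : Type*} [Fintype ι]

/-- The Rademacher sum `∑ i, ± v i` as a process indexed by `v`. Sign patterns are encoded as
`ι → Bool`, with `true` for `+1`, and carry the uniform measure. -/
def rademacherProcess (v : EuclideanSpace ℝ ι) (σ : ι → Bool) : ℝ :=
  ∑ i, (if σ i then (1 : ℝ) else -1) * v i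

lemma rademacherProcess_sub (v w : EuclideanSpace ℝ ι) :
    rademacherProcess (v - w) = rademacherProcess v - rademacherProcess w := by
  ext σ
  simp only [rademacherProcess, PiLp.sub_apply, mul_sub, Finset.sum_sub_distrib, Pi.sub_apply]

lemma integral_sign_mul (a : ℝ) :
    ∫ b : Bool, (if b then (1 : ℝ) else -1) * a ∂uniformOn Set.univ = 0 := by
  rw [integral_uniformOn_univ]
  simp

lemma hasSubgaussianMGF_sign_mul (a : ℝ) :
    HasSubgaussianMGF (fun b : Bool => (if b then (1 : ℝ) else -1) * a) (‖a‖₊ ^ 2)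
      (uniformOn Set.univ) := by
  convert hasSubgaussianMGF_of_mem_Icc_of_integral_eq_zero (a := -|a|) (b := |a|)
    (measurable_of_finite _).aemeasurable (.of_forall fun b => ?_) (integral_sign_mul a) using 1
  · ext
    simp [← two_mul]
  · cases b <;> simp [neg_le_abs, le_abs_self, neg_le]

lemma uniformOn_univ_bool_pi : (uniformOn Set.univ : Measure (ι → Bool)) =
    Measure.pi fun _ => uniformOn Set.univ := by
  rw [← Set.pi_univ Set.univ, uniformOn_pi]

lemma hasSubgaussianMGF_rademacherProcess (v : EuclideanSpace ℝ ι) :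
    HasSubgaussianMGF (rademacherProcess v) (‖v‖₊ ^ 2) (uniformOn Set.univ) := by
  have hv : ‖v‖₊ ^ 2 = ∑ i, ‖v i‖₊ ^ 2 := by
    rw [EuclideanSpace.nnnorm_eq, NNReal.sq_sqrt]
  rw [hv, uniformOn_univ_bool_pi]
  refine HasSubgaussianMGF.sum_of_iIndepFun
    (iIndepFun_pi (μ := fun _ => uniformOn Set.univ)
      (X := fun i (b : Bool) => (if b then (1 : ℝ) else -1) * v i)
      fun _ => (measurable_of_finite _).aemeasurable) fun i _ => ?_
  refine HasSubgaussianMGF.of_map (Y := fun σ : ι → Bool => σ i)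
    (X := fun b => (if b then (1 : ℝ) else -1) * v i) (measurable_pi_apply i).aemeasurable ?_
  rw [(measurePreserving_eval _ i).map_eq]
  exact hasSubgaussianMGF_sign_mul (v i)

lemma integral_rademacherProcess (v : EuclideanSpace ℝ ι) :
    ∫ σ, rademacherProcess v σ ∂uniformOn Set.univ = 0 := by
  simp only [rademacherProcess]
  rw [integral_finsetSum _ fun _ _ => .of_finite, uniformOn_univ_bool_pi]
  refine Finset.sum_eq_zero fun i _ => ?_
  exact (integral_comp_eval (X := fun _ : ι => Bool)
    (f := fun b : Bool => (if b then (1 : ℝ) else -1) * v i)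
    (measurable_of_finite _).aestronglyMeasurable).trans (integral_sign_mul _)

lemma isCenteredSubgaussianProcess_rademacherProcess :
    IsCenteredSubgaussianProcess (rademacherProcess (ι := ι)) (uniformOn Set.univ) where
  integrable _ := .of_finite
  integral_eq_zero := integral_rademacherProcess
  hasSubgaussianMGF_sub v w := by
    rw [← rademacherProcess_sub, nndist_eq_nnnorm]
    exact hasSubgaussianMGF_rademacherProcess (v - w)

end Rademacher

section Sample

variable {ι α : Type*} [Fintype ι]

/-- The empirical `L₂` pseudometric `d_x` on functions, for a sample `x`. -/
noncomputable def empiricalDist (x : ι → α) (f g : α → ℝ) : ℝ :=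
  √(1 / Fintype.card ι * ∑ i, (f (x i) - g (x i)) ^ 2)

/-- The empirical Rademacher complexity of the class `G` on the sample `x`, with the expectation
written as an average over all sign patterns. The supremum is `0` by convention when it is
infinite. -/
noncomputable def empiricalRademacherComplexity [DecidableEq ι] (x : ι → α)
    (G : Set (α → ℝ)) : ℝ :=
  1 / 2 ^ Fintype.card ι * ∑ σ : ι → Bool,
    sSup ((fun f : α → ℝ => 1 / Fintype.card ι * ∑ i, (if σ i then (1 : ℝ) else -1) * f (x i)) '' G)

/-- The values of `f` on the sample `x`, divided by `√n` so that the Euclidean distance between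
sample vectors is the empirical `L₂` distance. -/
noncomputable def sampleVector (x : ι → α) (f : α → ℝ) : EuclideanSpace ℝ ι :=
  WithLp.toLp 2 fun i => f (x i) / √(Fintype.card ι)

lemma dist_sampleVector (x : ι → α) (f g : α → ℝ) :
    dist (sampleVector x f) (sampleVector x g) = empiricalDist x f g := by
  rw [EuclideanSpace.dist_eq, empiricalDist]
  simp only [sampleVector, Real.dist_eq, sq_abs, ← sub_div, div_pow,
    Real.sq_sqrt (Nat.cast_nonneg _), ← Finset.sum_div, div_mul_eq_mul_div, one_mul]

lemma hasPolynomialCover_image_sampleVector {x : ι → α} {G : Set (α → ℝ)} {R d : ℝ}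
    (hcover : ∀ ε, 0 < ε → ε ≤ R → ∃ S : Finset (α → ℝ), (#S : ℝ) ≤ (R / ε) ^ d ∧
      ∀ f ∈ G, ∃ g ∈ S, empiricalDist x f g ≤ ε) :
    HasPolynomialCover (sampleVector x '' G) R d := by
  classical
  intro ε hε hεR
  obtain ⟨S, hScard, hS⟩ := hcover ε hε hεR
  refine ⟨S.image (sampleVector x),
    (Nat.cast_le.mpr Finset.card_image_le).trans hScard, ?_⟩
  rintro _ ⟨f, hf, rfl⟩
  obtain ⟨g, hg, hfg⟩ := hS f hf
  exact ⟨_, Finset.mem_image_of_mem _ hg, (dist_sampleVector x f g).trans_le hfg⟩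

lemma average_sign_mul_eq (x : ι → α) (f : α → ℝ) (σ : ι → Bool) :
    1 / Fintype.card ι * ∑ i, (if σ i then (1 : ℝ) else -1) * f (x i) =
      (√(Fintype.card ι))⁻¹ * rademacherProcess (sampleVector x f) σ := by
  simp only [rademacherProcess, sampleVector, ← mul_div_assoc, ← Finset.sum_div]
  rw [inv_mul_eq_div, div_div, Real.mul_self_sqrt (Nat.cast_nonneg _), one_div_mul_eq_div]

lemma empiricalRademacherComplexity_eq_integral [DecidableEq ι] (x : ι → α) (G : Set (α → ℝ)) :
    empiricalRademacherComplexity x G = (√(Fintype.card ι))⁻¹ *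
      ∫ σ, sSup ((rademacherProcess · σ) '' (sampleVector x '' G)) ∂uniformOn Set.univ := by
  have hsup (σ : ι → Bool) : sSup ((fun f : α → ℝ => 1 / Fintype.card ι *
      ∑ i, (if σ i then (1 : ℝ) else -1) * f (x i)) '' G) =
      (√(Fintype.card ι))⁻¹ * sSup ((rademacherProcess · σ) '' (sampleVector x '' G)) := by
    rw [← smul_eq_mul, ← Real.sSup_smul_of_nonneg (by positivity), Set.image_image,
      ← Set.image_smul, Set.image_image]
    simp only [average_sign_mul_eq, smul_eq_mul]
  simp only [empiricalRademacherComplexity, hsup]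
  rw [integral_uniformOn_univ, ← Finset.mul_sum, mul_left_comm, Fintype.card_fun,
    Fintype.card_bool, Nat.cast_pow, Nat.cast_ofNat]

theorem dudley_rademacher_bound_general [Nonempty ι] [DecidableEq ι] {R p : ℝ} (hR : 0 < R)
    (hp : 0 ≤ p) {G : Set (α → ℝ)} (hG : G.Nonempty) (x : ι → α)
    (hcover : ∀ ε, 0 < ε → ε ≤ R → ∃ S : Finset (α → ℝ), (#S : ℝ) ≤ (R / ε) ^ (2 * p) ∧
      ∀ f ∈ G, ∃ g ∈ S, empiricalDist x f g ≤ ε) :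
    empiricalRademacherComplexity x G ≤ 12 * R * √(p / Fintype.card ι) := by
  have hV := hasPolynomialCover_image_sampleVector hcover
  have hsup : ∫ σ, sSup ((rademacherProcess · σ) '' (sampleVector x '' G)) ∂uniformOn Set.univ
      ≤ 6 * R * √(2 * (2 * p)) :=
    integral_sSup_image_le_of_forall_finset (hG.image _) fun F hF hFV =>
      isCenteredSubgaussianProcess_rademacherProcess.integral_sup'_le_of_hasPolynomialCover hF hR
        (by positivity) (hV.mono hFV)
  calc empiricalRademacherComplexity x G ≤ (√(Fintype.card ι))⁻¹ * (6 * R * √(2 * (2 * p))) := by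
        rw [empiricalRademacherComplexity_eq_integral]
        gcongr
    _ = 12 * R * √(p / Fintype.card ι) := by
        rw [← mul_assoc 2 2 p, Real.sqrt_mul (by norm_num), Real.sqrt_mul_self (by norm_num),
          Real.sqrt_div hp]
        ring

end Sample

/-- Dudley-type bound: if a uniformly `B`-bounded class `𝒢` admits empirical
`L₂` covering numbers `N(ε, 𝒢, d_x) ≤ (CB/ε)^{2p}` for all `ε ∈ (0, CB]`, then
there is a constant `D > 0` depending only on `C` such that the empirical
Rademacher complexity of `𝒢` on any `n` points is at most `D B √(p/n)`.  The
expectation over the Rademacher vector `ε ∈ {-1,1}^n` is written as the average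
over all `2^n` sign patterns. -/
theorem dudley_rademacher_bound :
    ∀ C : ℝ, 1 ≤ C →
    ∃ D : ℝ, 0 < D ∧
      ∀ (α : Type u) (B : ℝ), 0 < B → ∀ p : ℝ, 1 ≤ p →
      ∀ G : Set (α → ℝ), G.Nonempty → (∀ f ∈ G, ∀ x, |f x| ≤ B) →
        -- covering-number assumption
        (∀ n : ℕ, 0 < n → ∀ x : Fin n → α, ∀ ε : ℝ, 0 < ε → ε ≤ C * B →
          ∃ S : Finset (α → ℝ), (S.card : ℝ) ≤ (C * B / ε) ^ (2 * p) ∧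
            ∀ f ∈ G, ∃ g ∈ S,
              Real.sqrt ((1 / (n : ℝ)) * ∑ i, (f (x i) - g (x i)) ^ 2) ≤ ε) →
        ∀ n : ℕ, 0 < n → ∀ x : Fin n → α,
          (1 / 2 ^ n : ℝ) * ∑ ε : Fin n → Bool,
              sSup ((fun f : α → ℝ => (1 / (n : ℝ)) * ∑ i,
                  (if ε i then (1 : ℝ) else -1) * f (x i)) '' G)
            ≤ D * B * Real.sqrt (p / n) := by
  refine fun C hC => ⟨12 * C, by positivity, fun α B hB p hp G hG _ hcover n hn x => ?_⟩
  have := Fin.pos_iff_nonempty.mp hn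
  simpa [empiricalRademacherComplexity, empiricalDist, mul_assoc] using
    dudley_rademacher_bound_general (R := C * B) (by positivity) (by positivity) hG x
      (by simpa [empiricalDist] using hcover n hn x)
end
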